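/- Let n ≥ 2 and let X be a multivariate normal random vector in ℝⁿ with mean μ ∈ ℝⁿ and positive definite covariance matrix Σ. For each permutation σ of {1,…,n}, let c_σ ∈ ℝⁿ be the vector with entries (c_σ)_{σ(i)} = 4i − 2n − 2 (a permutation of the coefficients 4i − 2n − 2, i = 1,…,n), and let a²_σ = c_σᵀ Σ c_σ. Then lim_{x→∞} (1/x²)·log P(S_n(X) > x) = −1/(2·max_σ a²_σ), where the maximum is over all n! permutations σ. -/

import Mathlib

open MeasureTheory ProbabilityTheory Matrix Filter Finset

/-- Characteristic function of a random vector `X : Ω → ℝⁿ` at `t ∈ ℝⁿ`: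
`E[exp(i⟨t,X⟩)]`. -/
noncomputable def charFn {Ω : Type*} [MeasurableSpace Ω] {n : ℕ}
    (P : Measure Ω) (X : Ω → (Fin n → ℝ)) (t : Fin n → ℝ) : ℂ :=
  ∫ ω, Complex.exp (((∑ i, t i * X ω i : ℝ) : ℂ) * Complex.I) ∂P

/-- The coefficient vector `c_σ` with entries `(c_σ)_{σ(i)} = 4i − 2n − 2`,
i.e. `c_σ j = 4(σ⁻¹(j)+1) − 2n − 2` (0-based `Fin n` indices). -/
noncomputable def permCoef {n : ℕ} (σ : Equiv.Perm (Fin n)) : Fin n → ℝ :=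
  fun j => (4 * ((σ.symm j : ℕ) + 1) : ℝ) - 2 * n - 2

lemma gini_sg_sum {n : ℕ} (i : Fin n) :
    ∑ j : Fin n, ((if j < i then (1:ℝ) else 0) - (if i < j then 1 else 0))
      = 2 * (i : ℕ) + 1 - n := by
  rw [Finset.sum_sub_distrib, Finset.sum_boole, Finset.sum_boole]
  have h1 : (univ.filter (fun j : Fin n => j < i)) = Finset.Iio i := by ext; simp
  have h2 : (univ.filter (fun j : Fin n => i < j)) = Finset.Ioi i := by ext; simp
  rw [h1, h2, Fin.card_Iio, Fin.card_Ioi]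
  have : (((n - 1 - (i:ℕ) : ℕ)) : ℝ) + i + 1 = n := by
    have := i.2
    norm_cast
    omega
  linarith

lemma gini_coef_eq {n : ℕ} (σ : Equiv.Perm (Fin n)) (x : Fin n → ℝ) :
    ∑ j, permCoef σ j * x j =
      ∑ i, ∑ j, ((if j < i then (1:ℝ) else 0) - (if i < j then 1 else 0)) * (x (σ i) - x (σ j)) := by
  have e1 : ∑ j, permCoef σ j * x j = ∑ i, (2 * (2 * ((i : Fin n) : ℕ) + 1 - (n:ℝ))) * x (σ i) := by
    rw [← Equiv.sum_comp σ]
    refine Finset.sum_congr rfl fun i _ => ?_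
    simp only [permCoef, Equiv.symm_apply_apply]
    ring
  have e2 : ∑ i : Fin n, ∑ j : Fin n, ((if j < i then (1:ℝ) else 0) - (if i < j then 1 else 0)) * x (σ i)
      = ∑ i, (2 * ((i : Fin n) : ℕ) + 1 - (n:ℝ)) * x (σ i) := by
    refine Finset.sum_congr rfl fun i _ => ?_
    rw [← Finset.sum_mul, gini_sg_sum]
  have e3 : ∑ i : Fin n, ∑ j : Fin n, ((if j < i then (1:ℝ) else 0) - (if i < j then 1 else 0)) * x (σ j)
      = - ∑ i, (2 * ((i : Fin n) : ℕ) + 1 - (n:ℝ)) * x (σ i) := by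
    rw [Finset.sum_comm, ← e2, ← Finset.sum_neg_distrib]
    refine Finset.sum_congr rfl fun i _ => ?_
    rw [← Finset.sum_neg_distrib]
    refine Finset.sum_congr rfl fun j _ => ?_
    ring
  simp only [mul_sub]
  simp only [Finset.sum_sub_distrib]
  rw [e2, e3, e1, sub_neg_eq_add, ← Finset.sum_add_distrib]
  refine Finset.sum_congr rfl fun i _ => ?_
  ring

lemma gini_abs_perm {n : ℕ} (σ : Equiv.Perm (Fin n)) (x : Fin n → ℝ) :
    ∑ i, ∑ j, |x i - x j| = ∑ i, ∑ j, |x (σ i) - x (σ j)| := by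
  rw [← Equiv.sum_comp σ]
  refine Finset.sum_congr rfl fun i _ => ?_
  rw [← Equiv.sum_comp σ]

lemma gini_coef_le {n : ℕ} (σ : Equiv.Perm (Fin n)) (x : Fin n → ℝ) :
    ∑ j, permCoef σ j * x j ≤ ∑ i, ∑ j, |x i - x j| := by
  rw [gini_coef_eq, gini_abs_perm σ]
  refine Finset.sum_le_sum fun i _ => Finset.sum_le_sum fun j _ => ?_
  have h1 := le_abs_self (x (σ i) - x (σ j))
  have h2 := neg_abs_le (x (σ i) - x (σ j))
  have h3 := abs_nonneg (x (σ i) - x (σ j))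
  split_ifs <;> linarith

lemma gini_coef_exists {n : ℕ} (x : Fin n → ℝ) :
    ∃ σ : Equiv.Perm (Fin n), ∑ j, permCoef σ j * x j = ∑ i, ∑ j, |x i - x j| := by
  refine ⟨Tuple.sort x, ?_⟩
  have hm := Tuple.monotone_sort x
  rw [gini_coef_eq, gini_abs_perm (Tuple.sort x)]
  refine Finset.sum_congr rfl fun i _ => Finset.sum_congr rfl fun j _ => ?_
  rcases lt_trichotomy i j with h | h | h
  · have := hm h.le
    simp only [Function.comp] at this
    rw [abs_of_nonpos (by linarith), if_neg h.not_gt, if_pos h]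
    ring
  · subst h; simp
  · have := hm h.le
    simp only [Function.comp] at this
    rw [abs_of_nonneg (by linarith), if_neg h.not_gt, if_pos h]
    ring

lemma gini_law {Ω : Type*} [MeasurableSpace Ω]
    (P : Measure Ω) [IsProbabilityMeasure P] {n : ℕ}
    (X : Ω → Fin n → ℝ) (hX : Measurable X)
    (μ : Fin n → ℝ) (S : Matrix (Fin n) (Fin n) ℝ)
    (hgauss : ∀ t : Fin n → ℝ,
      charFn P X t = Complex.exp (((∑ i, t i * μ i : ℝ) : ℂ) * Complex.I
        - ((t ⬝ᵥ S *ᵥ t : ℝ) : ℂ) / 2)) (c : Fin n → ℝ) (hc : 0 ≤ c ⬝ᵥ S *ᵥ c) :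
    P.map (fun ω => ∑ j, c j * X ω j) =
      gaussianReal (∑ j, c j * μ j) (c ⬝ᵥ S *ᵥ c).toNNReal := by
  have hm : Measurable (fun ω => ∑ j, c j * X ω j) := by fun_prop
  have : IsProbabilityMeasure (P.map (fun ω => ∑ j, c j * X ω j)) :=
    Measure.isProbabilityMeasure_map hm.aemeasurable
  refine Measure.ext_of_charFun (funext fun t => ?_)
  rw [charFun_gaussianReal, charFun_apply_real, integral_map hm.aemeasurable (by fun_prop)]
  have h := hgauss (t • c)
  unfold charFn at h
  have e : ∀ y : Fin n → ℝ, ∑ i, (t • c) i * y i = t * ∑ i, c i * y i := by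
    intro y; simp [Finset.mul_sum, mul_assoc]
  simp only [e] at h
  rw [mulVec_smul, smul_dotProduct, dotProduct_smul] at h
  simp only [smul_eq_mul, Complex.ofReal_mul] at h ⊢
  rw [h, Real.coe_toNNReal _ hc]
  congr 1
  ring

lemma gini_upper {Ω : Type*} [MeasurableSpace Ω]
    (P : Measure Ω) [IsProbabilityMeasure P] (Y : Ω → ℝ) (hY : Measurable Y) (m v : ℝ) (hv : 0 < v)
    (h : P.map Y = gaussianReal m v.toNNReal) (x : ℝ) (hx : m ≤ x) :
    P.real {ω | x < Y ω} ≤ Real.exp (-(x - m) ^ 2 / (2 * v)) := by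
  have hint : Integrable (fun ω => Real.exp ((x - m) / v * Y ω)) P := by
    have := integrable_exp_mul_gaussianReal (μ := m) (v := v.toNNReal) ((x - m) / v)
    rw [← h] at this
    exact (integrable_map_measure (by fun_prop) hY.aemeasurable).1 this
  have h1 := measure_ge_le_exp_mul_mgf (μ := P) (X := Y) (t := (x - m) / v) x
    (div_nonneg (by linarith) hv.le) hint
  rw [mgf_gaussianReal h, ← Real.exp_add, Real.coe_toNNReal _ hv.le] at h1
  have h2 : P.real {ω | x < Y ω} ≤ P.real {ω | x ≤ Y ω} :=
    measureReal_mono (Set.setOf_subset_setOf.2 fun ω hω => le_of_lt hω)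
  refine h2.trans (h1.trans (le_of_eq ?_))
  congr 1
  field_simp
  ring

lemma gini_lower {Ω : Type*} [MeasurableSpace Ω]
    (P : Measure Ω) [IsProbabilityMeasure P] (Y : Ω → ℝ) (hY : Measurable Y) (m v : ℝ) (hv : 0 < v)
    (h : P.map Y = gaussianReal m v.toNNReal) (x : ℝ) (hx : m ≤ x) :
    (Real.sqrt (2 * Real.pi * v))⁻¹ * Real.exp (-(x + 1 - m) ^ 2 / (2 * v))
      ≤ P.real {ω | x < Y ω} := by
  have hv' : v.toNNReal ≠ 0 := by simpa using hv
  have e : P.real {ω | x < Y ω} = (gaussianReal m v.toNNReal).real (Set.Ioi x) := by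
    rw [← h, map_measureReal_apply hY measurableSet_Ioi]; rfl
  rw [e]
  refine le_trans ?_ (measureReal_mono (s₁ := Set.Ioc x (x+1)) Set.Ioc_subset_Ioi_self)
  rw [measureReal_def, gaussianReal_apply_eq_integral _ hv', ENNReal.toReal_ofReal
    (integral_nonneg fun _ => gaussianPDFReal_nonneg _ _ _)]
  have : ∫ y in Set.Ioc x (x+1), gaussianPDFReal m v.toNNReal (x + 1)
      ≤ ∫ y in Set.Ioc x (x+1), gaussianPDFReal m v.toNNReal y := by
    refine setIntegral_mono_on (by simp) (integrable_gaussianPDFReal _ _).integrableOn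
      measurableSet_Ioc fun y hy => ?_
    simp only [gaussianPDFReal]
    gcongr
    · linarith [hy.1]
    · exact hy.2
  refine le_trans (le_of_eq ?_) this
  simp [gaussianPDFReal, hv.le]

lemma gini_lim (A B M : ℝ) (hM : 0 < M) :
    Tendsto (fun x : ℝ => (A + -(x - B) ^ 2 / (2 * M)) / x ^ 2) atTop (nhds (-1 / (2 * M))) := by
  have h1 : Tendsto (fun x : ℝ => x⁻¹) atTop (nhds 0) := tendsto_inv_atTop_zero
  have h2 : Tendsto (fun x : ℝ => A * (x⁻¹)^2 + -(1 - B * x⁻¹) ^ 2 / (2 * M)) atTop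
      (nhds (A * 0 ^ 2 + -(1 - B * 0) ^ 2 / (2 * M))) :=
    (((h1.pow 2).const_mul A)).add ((((h1.const_mul B).const_sub 1).pow 2).neg.div_const _)
  have e : A * 0 ^ 2 + -(1 - B * 0) ^ 2 / (2 * M) = -1 / (2 * M) := by simp
  rw [e] at h2
  refine h2.congr' ?_
  filter_upwards [eventually_gt_atTop 0] with x hx
  field_simp

/-- if `n ≥ 2` and `X ∼ Nₙ(μ, Σ)` with `Σ` positive definite, then
`lim_{x→∞} (1/x²)·log P(Sₙ(X) > x) = −1/(2·max_σ a²_σ)`, where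
`Sₙ(X) = ∑ᵢ∑ⱼ |Xᵢ − Xⱼ|` is the unnormalized Gini sum and `a²_σ = c_σᵀ Σ c_σ` for the
permuted coefficient vectors `c_σ`. -/
theorem gini_large_deviation_multivariate_normal {Ω : Type*} [MeasurableSpace Ω]
    (P : Measure Ω) [IsProbabilityMeasure P] {n : ℕ} (hn : 2 ≤ n)
    (X : Ω → Fin n → ℝ) (hX : Measurable X)
    (μ : Fin n → ℝ) (S : Matrix (Fin n) (Fin n) ℝ) (hS : S.PosDef)
    (hgauss : ∀ t : Fin n → ℝ,
      charFn P X t = Complex.exp (((∑ i, t i * μ i : ℝ) : ℂ) * Complex.I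
        - ((t ⬝ᵥ S *ᵥ t : ℝ) : ℂ) / 2)) :
    Tendsto
      (fun x : ℝ => Real.log (P {ω | x < ∑ i : Fin n, ∑ j : Fin n, |X ω i - X ω j|}).toReal / x ^ 2)
      atTop
      (nhds (-1 / (2 * Finset.univ.sup' (Finset.univ_nonempty)
        (fun σ : Equiv.Perm (Fin n) => permCoef σ ⬝ᵥ S *ᵥ permCoef σ)))) := by
  have hpos : ∀ σ : Equiv.Perm (Fin n), 0 < permCoef σ ⬝ᵥ S *ᵥ permCoef σ := by
    intro σ
    have hne : permCoef σ ≠ 0 := by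
      intro h0
      have := congrFun h0 (σ ⟨0, by omega⟩)
      simp only [permCoef, Equiv.symm_apply_apply, Pi.zero_apply] at this
      have h2 : (2:ℝ) ≤ n := by exact_mod_cast hn
      norm_num at this
      linarith
    simpa using hS.dotProduct_mulVec_pos hne
  obtain ⟨σ₀, -, hσ₀⟩ := Finset.exists_mem_eq_sup' (Finset.univ_nonempty)
    (fun σ : Equiv.Perm (Fin n) => permCoef σ ⬝ᵥ S *ᵥ permCoef σ)
  have hle : ∀ σ : Equiv.Perm (Fin n), permCoef σ ⬝ᵥ S *ᵥ permCoef σ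
      ≤ permCoef σ₀ ⬝ᵥ S *ᵥ permCoef σ₀ := by
    intro σ
    rw [← hσ₀]
    exact Finset.le_sup' (fun σ : Equiv.Perm (Fin n) => permCoef σ ⬝ᵥ S *ᵥ permCoef σ)
      (Finset.mem_univ σ)
  rw [hσ₀]
  set M := permCoef σ₀ ⬝ᵥ S *ᵥ permCoef σ₀ with hM
  have hMpos : 0 < M := hpos σ₀
  set m : Equiv.Perm (Fin n) → ℝ := fun σ => ∑ j, permCoef σ j * μ j with hm
  set K : ℝ := ∑ σ, |m σ| with hK
  have hmK : ∀ σ, m σ ≤ K := fun σ => (le_abs_self _).trans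
    (Finset.single_le_sum (f := fun σ => |m σ|) (fun _ _ => abs_nonneg _) (Finset.mem_univ σ))
  have hlaw := fun σ => gini_law P X hX μ S hgauss (permCoef σ) (hpos σ).le
  have hmeas : ∀ σ : Equiv.Perm (Fin n), Measurable (fun ω => ∑ j, permCoef σ j * X ω j) := by
    intro σ; fun_prop
  set N : ℝ := ((Fintype.card (Equiv.Perm (Fin n)) : ℕ) : ℝ) with hN
  have hNpos : 0 < N := by rw [hN]; exact_mod_cast Fintype.card_pos
  have hup : ∀ x, K ≤ x → P.real {ω | x < ∑ i : Fin n, ∑ j : Fin n, |X ω i - X ω j|}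
      ≤ N * Real.exp (-(x - K) ^ 2 / (2 * M)) := by
    intro x hx
    have hsub : {ω | x < ∑ i : Fin n, ∑ j : Fin n, |X ω i - X ω j|} ⊆
        ⋃ σ : Equiv.Perm (Fin n), {ω | x < ∑ j, permCoef σ j * X ω j} := by
      intro ω hω
      obtain ⟨σ, hσ⟩ := gini_coef_exists (X ω)
      refine Set.mem_iUnion.2 ⟨σ, ?_⟩
      simp only [Set.mem_setOf_eq] at hω ⊢
      rwa [hσ]
    refine (measureReal_mono hsub).trans ((measureReal_iUnion_fintype_le _).trans ?_)
    calc _ ≤ ∑ σ : Equiv.Perm (Fin n), Real.exp (-(x - K) ^ 2 / (2 * M)) := by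
          refine Finset.sum_le_sum fun σ _ => ?_
          refine (gini_upper P _ (hmeas σ) _ _ (hpos σ) (hlaw σ) x ((hmK σ).trans hx)).trans ?_
          rw [Real.exp_le_exp, neg_div, neg_div, neg_le_neg_iff]
          have h1 : x - K ≤ x - m σ := by linarith [hmK σ]
          have h2 : 0 ≤ x - K := by linarith
          exact div_le_div₀ (sq_nonneg _) (pow_le_pow_left₀ h2 h1 2)
            (by linarith [hpos σ]) (by linarith [hle σ])
      _ = _ := by rw [Finset.sum_const, nsmul_eq_mul, Finset.card_univ]
  have hlow : ∀ x, K ≤ x →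
      (Real.sqrt (2 * Real.pi * M))⁻¹ * Real.exp (-(x - (m σ₀ - 1)) ^ 2 / (2 * M))
      ≤ P.real {ω | x < ∑ i : Fin n, ∑ j : Fin n, |X ω i - X ω j|} := by
    intro x hx
    have := gini_lower P _ (hmeas σ₀) _ _ hMpos (hlaw σ₀) x ((hmK σ₀).trans hx)
    rw [show x - (m σ₀ - 1) = x + 1 - m σ₀ by ring]
    refine this.trans (measureReal_mono fun ω hω => ?_)
    exact lt_of_lt_of_le hω (gini_coef_le σ₀ (X ω))
  set D : ℝ := (Real.sqrt (2 * Real.pi * M))⁻¹ with hD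
  have hDpos : 0 < D := by positivity
  refine tendsto_of_tendsto_of_tendsto_of_le_of_le'
    (gini_lim (Real.log D) (m σ₀ - 1) M hMpos) (gini_lim (Real.log N) K M hMpos) ?_ ?_
  · filter_upwards [eventually_ge_atTop K] with x hx
    refine div_le_div_of_nonneg_right ?_ (sq_nonneg x)
    have := Real.log_le_log (by positivity) (hlow x hx)
    rwa [Real.log_mul hDpos.ne' (Real.exp_pos _).ne', Real.log_exp] at this
  · filter_upwards [eventually_ge_atTop K] with x hx
    refine div_le_div_of_nonneg_right ?_ (sq_nonneg x)
    have h0 : 0 < P.real {ω | x < ∑ i : Fin n, ∑ j : Fin n, |X ω i - X ω j|} :=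
      lt_of_lt_of_le (by positivity) (hlow x hx)
    have := Real.log_le_log h0 (hup x hx)
    rwa [Real.log_mul hNpos.ne' (Real.exp_pos _).ne', Real.log_exp] at this
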